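/- Let $G=(V,E)$ be a connected finite simple graph with $|V|\neq 2$ (equivalently, $G$ is connected and is not the complete graph $K_2$). Call a vertex of a tree a leaf if it has degree exactly $1$ in the tree, and let $\ell(G)$ be the maximum number of leaves over all spanning trees of $G$. For $X\subseteq V$ let $N^{\circ}_G(X)$ be the set of vertices in $V\setminus X$ that are adjacent to at least one vertex of $X$. Then there exists a nonempty set $X\subseteq V$ such that the induced subgraph $G[X]$ is connected and $|N^{\circ}_G(X)|=\ell(G)$. -/

import Mathlib

noncomputable section

open scoped Classical

/-- The degree of a vertex in a graph on a finite vertex type. -/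
def deg {W : Type*} [Fintype W] (T : SimpleGraph W) (v : W) : ℕ :=
  (Finset.univ.filter (fun w => T.Adj v w)).card

/-- A leaf of a graph (in particular, of a tree) is a vertex of degree 1. -/
def IsLeaf {W : Type*} [Fintype W] (T : SimpleGraph W) (v : W) : Prop :=
  deg T v = 1

/-- The number of leaves of a graph (in particular, of a tree). -/
def leafCount {W : Type*} [Fintype W] (T : SimpleGraph W) : ℕ :=
  (Finset.univ.filter (fun v => IsLeaf T v)).card

/-- The open neighborhood of a vertex, as a finset. -/
def nbrFinset {V : Type*} [Fintype V] (G : SimpleGraph V) (x : V) : Finset V :=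
  Finset.univ.filter (fun y => G.Adj x y)

/-- The closed neighborhood of a vertex, as a finset. -/
def closedNbr {V : Type*} [Fintype V] [DecidableEq V] (G : SimpleGraph V) (x : V) : Finset V :=
  insert x (nbrFinset G x)

/-- The closed neighborhood of a set of vertices. -/
def closedNbrSet {V : Type*} [Fintype V] [DecidableEq V] (G : SimpleGraph V)
    (A : Finset V) : Finset V :=
  A.biUnion (closedNbr G)

/-- The open neighborhood of a set of vertices: `N_G(A) \ A`. -/
def openNbrSet {V : Type*} [Fintype V] [DecidableEq V] (G : SimpleGraph V)
    (A : Finset V) : Finset V :=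
  closedNbrSet G A \ A

/-- `A` is a (nonempty) connected set of `G`: the induced subgraph `G[A]` is connected. -/
def IsConnSet {V : Type*} (G : SimpleGraph V) (A : Finset V) : Prop :=
  (G.induce (A : Set V)).Connected

/-- For connected `G`: the maximum number of leaves over all spanning trees of `G`.
The set of leaf counts is nonempty (`G` has a spanning tree) and bounded by the number of
vertices, so the supremum is a maximum. -/
def ell {V : Type*} [Fintype V] (G : SimpleGraph V) : ℕ :=
  sSup {k | ∃ T : SimpleGraph V, T ≤ G ∧ T.IsTree ∧ leafCount T = k}

end

/-!
Let `T` be a spanning tree of `G` with `ℓ(G)` leaves. Two adjacent leaves would be all of `T`, and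
`G` does not have exactly two vertices, so every leaf of `T` is adjacent to a non-leaf. A path
meets leaves at its endpoints only, so the non-leaves of `T` form a nonempty connected set, whose
open neighborhood, in `T` and hence in `G`, is exactly the set of leaves.
-/

section

open Finset

variable {V : Type*} {G T : SimpleGraph V}

theorem eq_univ_of_forall_adj_mem (hG : G.Preconnected) {s : Set V} (hs : s.Nonempty)
    (hclosed : ∀ x ∈ s, ∀ y, G.Adj x y → y ∈ s) : s = Set.univ := by
  obtain ⟨x, hx⟩ := hs
  by_contra hne
  obtain ⟨y, hy⟩ := (Set.ne_univ_iff_exists_notMem s).1 hne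
  obtain ⟨p⟩ := hG x y
  obtain ⟨d, -, hfst, hsnd⟩ := p.exists_boundary_dart s hx hy
  exact hsnd (hclosed d.fst hfst d.snd d.adj)

theorem IsConnSet.mono (hTG : T ≤ G) {A : Finset V} (hA : IsConnSet T A) : IsConnSet G A :=
  SimpleGraph.Connected.mono (SimpleGraph.comap_monotone _ hTG) hA

variable [Fintype V]

theorem mem_openNbrSet [DecidableEq V] {A : Finset V} {y : V} :
    y ∈ openNbrSet G A ↔ (∃ x ∈ A, G.Adj x y) ∧ y ∉ A := by
  simp only [openNbrSet, closedNbrSet, closedNbr, nbrFinset, mem_sdiff, mem_biUnion, mem_insert,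
    mem_filter_univ]
  grind

theorem openNbrSet_compl_eq_of_forall_exists_adj [DecidableEq V] {A : Finset V}
    (hA : ∀ v ∈ A, ∃ w ∉ A, G.Adj v w) : openNbrSet G Aᶜ = A := by
  ext y
  simp only [mem_openNbrSet, mem_compl, not_not, and_iff_right_iff_imp]
  intro hy
  obtain ⟨w, hw, hyw⟩ := hA y hy
  exact ⟨w, hw, hyw.symm⟩

theorem isLeaf_iff_existsUnique_adj {v : V} : IsLeaf T v ↔ ∃! w, T.Adj v w := by
  classical exact (Fintype.existsUnique_iff_card_one _).symm

theorem card_eq_two_of_adj_isLeaf (hT : T.Preconnected) {v w : V} (hvw : T.Adj v w)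
    (hv : IsLeaf T v) (hw : IsLeaf T w) : Fintype.card V = 2 := by
  classical
  rw [isLeaf_iff_existsUnique_adj] at hv hw
  have huniv : ({v, w} : Set V) = Set.univ := by
    refine eq_univ_of_forall_adj_mem hT (Set.insert_nonempty v {w}) ?_
    rintro x (rfl | rfl) y hxy
    · exact Or.inr (hv.unique hxy hvw)
    · exact Or.inl (hw.unique hxy hvw.symm)
  rw [← Nat.card_eq_fintype_card, ← Set.ncard_univ, ← huniv, Set.ncard_pair hvw.ne]

open scoped Classical in
/-- The set of leaves of a graph, used through its complement: in a spanning tree this is the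
connected set whose open neighborhood consists of the leaves. -/
noncomputable def leaves (T : SimpleGraph V) : Finset V :=
  univ.filter (IsLeaf T)

theorem mem_leaves {v : V} : v ∈ leaves T ↔ IsLeaf T v := by
  simp only [leaves, mem_filter_univ]

theorem card_leaves (T : SimpleGraph V) : (leaves T).card = leafCount T :=
  rfl

theorem exists_adj_notMem_leaves (hT : T.Preconnected) (hcard : Fintype.card V ≠ 2) {v : V}
    (hv : v ∈ leaves T) : ∃ w ∉ leaves T, T.Adj v w := by
  rw [mem_leaves] at hv
  obtain ⟨w, hvw⟩ := (isLeaf_iff_existsUnique_adj.1 hv).exists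
  exact ⟨w, fun hw ↦ hcard (card_eq_two_of_adj_isLeaf hT hvw hv (mem_leaves.1 hw)), hvw⟩

theorem compl_leaves_nonempty [DecidableEq V] (hT : T.Connected) (hcard : Fintype.card V ≠ 2) :
    (leaves T)ᶜ.Nonempty := by
  obtain ⟨v⟩ := hT.nonempty
  by_cases hv : v ∈ leaves T
  · obtain ⟨w, hw, -⟩ := exists_adj_notMem_leaves hT.preconnected hcard hv
    exact ⟨w, mem_compl.2 hw⟩
  · exact ⟨v, mem_compl.2 hv⟩

theorem isConnSet_compl_leaves [DecidableEq V] (hT : T.Connected) (hcard : Fintype.card V ≠ 2) :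
    IsConnSet T (leaves T)ᶜ := by
  have : Nonempty ((leaves T)ᶜ : Finset V) := (compl_leaves_nonempty hT hcard).to_subtype
  refine ⟨hT.preconnected.induce_of_degree_eq_one fun v hv x hx y hy ↦ ?_⟩
  have hleaf : IsLeaf T v := by simpa only [mem_coe, mem_compl, not_not, mem_leaves] using hv
  exact (isLeaf_iff_existsUnique_adj.1 hleaf).unique hx hy

theorem exists_isTree_leafCount_eq_ell (hG : G.Connected) :
    ∃ T ≤ G, T.IsTree ∧ leafCount T = ell G := by
  obtain ⟨T₀, hT₀G, hT₀⟩ := hG.exists_isTree_le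
  refine Nat.sSup_mem (s := {k | ∃ T ≤ G, T.IsTree ∧ leafCount T = k})
    ⟨leafCount T₀, T₀, hT₀G, hT₀, rfl⟩ ⟨Fintype.card V, ?_⟩
  rintro _ ⟨T, -, -, rfl⟩
  exact card_le_univ (leaves T)

end

/-- For every connected finite simple graph `G` whose number of vertices is not two (that is,
`G` is not `K₂`), there is a nonempty connected set `X` of `G` with `|N°_G(X)| = ℓ(G)`. -/
theorem exists_connset_open_nbr_ell {V : Type*} [Fintype V] [DecidableEq V]
    (G : SimpleGraph V) (hconn : G.Connected) (hcard : Fintype.card V ≠ 2) :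
    ∃ Xs : Finset V, Xs.Nonempty ∧ IsConnSet G Xs ∧ (openNbrSet G Xs).card = ell G := by
  obtain ⟨T, hTG, hT, hell⟩ := exists_isTree_leafCount_eq_ell hconn
  have hdom : ∀ v ∈ leaves T, ∃ w ∉ leaves T, G.Adj v w := fun v hv ↦
    have ⟨w, hw, hvw⟩ := exists_adj_notMem_leaves hT.connected.preconnected hcard hv
    ⟨w, hw, hTG hvw⟩
  refine ⟨(leaves T)ᶜ, compl_leaves_nonempty hT.connected hcard,
    (isConnSet_compl_leaves hT.connected hcard).mono hTG, ?_⟩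
  rw [openNbrSet_compl_eq_of_forall_exists_adj hdom, card_leaves, hell]
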